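/- arXiv:2312.08842 — 12 statements merged into one kernel-verified Lean document; each statement's English description precedes it below -/
import Mathlib

section
/- Let k, l ∈ ℂ, set m = k/2 − l, and let s₁,…,s_{d₀} ∈ ℂ∖{0,1} be pairwise distinct and t₁,…,t_{d₁} ∈ ℂ∖{0} be pairwise distinct with s_i ≠ t_j for all i, j, satisfying the Gaudin Bethe Ansatz Equations (BLZ case): for each i = 1,…,d₀, (1/2)/(s_i−1) + m/s_i + ∑_{j=1}^{d₁} 1/(s_i−t_j) − ∑_{j≠i} 1/(s_i−s_j) = 0, and for each i = 1,…,d₁, l/t_i + ∑_{j=1}^{d₀} 1/(t_i−s_j) − ∑_{j≠i} 1/(t_i−t_j) = 0. Then, with r = d₀ − d₁, the identity ∑_{i=1}^{d₀} s_i/(s_i−1) = −d₀(k+2) + r(r+1) + 2·l·r holds. -/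
open Finset

lemma self_sum_aux (n : ℕ) (x : Fin n → ℂ) (hx : Function.Injective x) :
    2 * ∑ i, x i * ∑ j ∈ univ.erase i, 1 / (x i - x j) = (n : ℂ) * n - n := by
  have h1 : ∀ i, x i * ∑ j ∈ univ.erase i, 1 / (x i - x j) = ∑ j, x i * (1 / (x i - x j)) := by
    intro i
    rw [← mul_sum, ← add_sum_erase univ _ (mem_univ i)]
    simp
  simp_rw [h1]
  have h2 : ∑ i, ∑ j, x i * (1 / (x i - x j)) = ∑ i, ∑ j, x j * (1 / (x j - x i)) := sum_comm
  have h3 : ∀ i j, x i * (1 / (x i - x j)) + x j * (1 / (x j - x i))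
      = 1 - if i = j then (1 : ℂ) else 0 := by
    intro i j
    by_cases h : i = j
    · subst h; simp
    · have ha : x i - x j ≠ 0 := sub_ne_zero.2 (fun e => h (hx e))
      rw [if_neg h, ← neg_sub (x i) (x j)]
      field_simp
      ring
  rw [two_mul]
  nth_rewrite 2 [h2]
  rw [← sum_add_distrib]
  simp_rw [← sum_add_distrib, h3]
  simp

/-- Lemma 3.2 ("at infinity" identity) for the Gaudin Bethe Ansatz Equations in the BLZ case:
for a solution `s`, `t` of the BAE with `m = k/2 - l`, one has
`∑ i, s i / (s i - 1) = -d₀(k+2) + r(r+1) + 2 l r` where `r = d₀ - d₁`. -/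
theorem gaudin_BAE_at_infinity (k l : ℂ) (d₀ d₁ : ℕ)
    (s : Fin d₀ → ℂ) (t : Fin d₁ → ℂ)
    (hs_inj : Function.Injective s) (ht_inj : Function.Injective t)
    (hs0 : ∀ i, s i ≠ 0) (hs1 : ∀ i, s i ≠ 1) (ht0 : ∀ j, t j ≠ 0)
    (hst : ∀ i j, s i ≠ t j)
    (hBAE1 : ∀ i, (1/2) / (s i - 1) + (k/2 - l) / s i
      + ∑ j, 1 / (s i - t j) - ∑ j ∈ univ.erase i, 1 / (s i - s j) = 0)
    (hBAE2 : ∀ i, l / t i + ∑ j, 1 / (t i - s j)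
      - ∑ j ∈ univ.erase i, 1 / (t i - t j) = 0) :
    ∑ i, s i / (s i - 1)
      = -(d₀ : ℂ) * (k + 2) + ((d₀ : ℂ) - (d₁ : ℂ)) * (((d₀ : ℂ) - (d₁ : ℂ)) + 1)
        + 2 * l * ((d₀ : ℂ) - (d₁ : ℂ)) := by
  have hS := self_sum_aux d₀ s hs_inj
  have hT := self_sum_aux d₁ t ht_inj
  have hC : ∑ i, s i * ∑ j, 1 / (s i - t j) + ∑ j, t j * ∑ i, 1 / (t j - s i)
      = (d₀ : ℂ) * d₁ := by
    simp_rw [mul_sum]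
    rw [sum_comm (s := (univ : Finset (Fin d₁))), ← sum_add_distrib]
    simp_rw [← sum_add_distrib]
    have : ∀ i j, s i * (1 / (s i - t j)) + t j * (1 / (t j - s i)) = 1 := by
      intro i j
      have ha : s i - t j ≠ 0 := sub_ne_zero.2 (hst i j)
      rw [← neg_sub (s i) (t j)]
      field_simp
      ring
    simp_rw [this]
    simp
  have e1 : (1/2) * ∑ i, s i / (s i - 1) + d₀ * (k/2 - l) + ∑ i, s i * ∑ j, 1 / (s i - t j)
      - ∑ i, s i * ∑ j ∈ univ.erase i, 1 / (s i - s j) = 0 := by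
    have : ∀ i, (1/2) * (s i / (s i - 1)) + (k/2 - l) + s i * ∑ j, 1 / (s i - t j)
      - s i * ∑ j ∈ univ.erase i, 1 / (s i - s j) = 0 := by
      intro i
      have h := hBAE1 i
      have hm : s i * ((k/2 - l) / s i) = k/2 - l := mul_div_cancel₀ _ (hs0 i)
      linear_combination s i * h - hm
    have h := sum_congr (rfl : (univ : Finset (Fin d₀)) = univ) (fun i _ => this i)
    rw [sum_sub_distrib, sum_add_distrib, sum_add_distrib, ← mul_sum] at h
    simpa only [sum_const, card_univ, Fintype.card_fin, nsmul_eq_mul, mul_zero] using h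
  have e2 : d₁ * l + ∑ i, t i * ∑ j, 1 / (t i - s j)
      - ∑ i, t i * ∑ j ∈ univ.erase i, 1 / (t i - t j) = 0 := by
    have : ∀ i, l + t i * ∑ j, 1 / (t i - s j)
      - t i * ∑ j ∈ univ.erase i, 1 / (t i - t j) = 0 := by
      intro i
      have h := hBAE2 i
      have hm : t i * (l / t i) = l := mul_div_cancel₀ _ (ht0 i)
      linear_combination t i * h - hm
    have h := sum_congr (rfl : (univ : Finset (Fin d₁)) = univ) (fun i _ => this i)
    rw [sum_sub_distrib, sum_add_distrib] at h
    simpa only [sum_const, card_univ, Fintype.card_fin, nsmul_eq_mul, mul_zero] using h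
  linear_combination 2 * e1 + 2 * e2 - 2 * hC + hS + hT
end

section
/- Let n ≥ 1, let z₁,…,z_n ∈ ℂ be pairwise distinct, let m₁,…,m_n, l₁,…,l_n, n₀, n₁ ∈ ℂ. Let s₁,…,s_{d₀} be pairwise distinct, t₁,…,t_{d₁} be pairwise distinct, with all s_i, t_j distinct from each other and from all z_a, satisfying the exponential Gaudin Bethe Ansatz Equations: for each i, ∑_a m_a/(s_i−z_a) + ∑_j 1/(s_i−t_j) − ∑_{j≠i} 1/(s_i−s_j) + n₀ = 0, and for each i, ∑_a l_a/(t_i−z_a) + ∑_j 1/(t_i−s_j) − ∑_{j≠i} 1/(t_i−t_j) + n₁ = 0. Define a₋(x) = −( n₁ + ∑_a l_a/(x−z_a) + ∑_i 1/(x−s_i) − ∑_j 1/(x−t_j) ). Then for every x ∈ ℂ distinct from all z_a, s_i, t_j one has a₋(x)² + a₋′(x) = n₁² + ∑_a (l_a² + l_a)/(x−z_a)² + ∑_i 2/(x−s_i)² + ∑_a A_a/(x−z_a) + ∑_i p_i/(x−s_i), where p_i = 2(n₀+n₁) + ∑_a (2m_a+2l_a)/(s_i−z_a) and A_a = 2 n₁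 l_a + ∑_{b≠a} 2 l_a l_b/(z_a−z_b) − 2 l_a ( ∑_j 1/(z_a−t_j) − ∑_i 1/(z_a−s_i) ). In particular the right-hand side has no poles at the points t_j. -/
open Finset

lemma aux_cross {ι κ : Type*} [Fintype ι] [Fintype κ] (c w : ι → ℂ) (d v : κ → ℂ) (x : ℂ)
    (hw : ∀ i, x ≠ w i) (hv : ∀ j, x ≠ v j) (h : ∀ i j, w i ≠ v j) :
    (∑ i, c i / (x - w i)) * (∑ j, d j / (x - v j))
      = ∑ i, c i * (∑ j, d j / (w i - v j)) / (x - w i)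
        + ∑ j, d j * (∑ i, c i / (v j - w i)) / (x - v j) := by
  have e2 : ∑ j, d j * (∑ i, c i / (v j - w i)) / (x - v j)
      = ∑ i, ∑ j, d j * (c i / (v j - w i)) / (x - v j) := by
    rw [Finset.sum_comm]
    refine Finset.sum_congr rfl fun j _ => ?_
    rw [Finset.mul_sum, Finset.sum_div]
  rw [e2, Finset.sum_mul_sum, ← Finset.sum_add_distrib]
  refine Finset.sum_congr rfl fun i _ => ?_
  rw [Finset.mul_sum, Finset.sum_div, ← Finset.sum_add_distrib]
  refine Finset.sum_congr rfl fun j _ => ?_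
  have h1 := sub_ne_zero.2 (hw i)
  have h2 := sub_ne_zero.2 (hv j)
  have h3 := sub_ne_zero.2 (h i j)
  have h4 : v j - w i = -(w i - v j) := by ring
  rw [h4]
  field_simp
  ring

lemma aux_sq {ι : Type*} [Fintype ι] (c w : ι → ℂ) (x : ℂ)
    (hw : ∀ i, x ≠ w i) (h : Function.Injective w) :
    (∑ i, c i / (x - w i)) ^ 2
      = ∑ i, c i ^ 2 / (x - w i) ^ 2
        + 2 * ∑ i, c i * (∑ j, c j / (w i - w j)) / (x - w i) := by
  classical
  have e1 : ∑ i, c i * (∑ j, c j / (w i - w j)) / (x - w i)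
      = ∑ i, ∑ j, c i * (c j / (w i - w j)) / (x - w i) := by
    refine Finset.sum_congr rfl fun j _ => ?_
    rw [Finset.mul_sum, Finset.sum_div]
  have e2 : ∑ i, c i ^ 2 / (x - w i) ^ 2
      = ∑ i, ∑ j, if i = j then c i ^ 2 / (x - w i) ^ 2 else 0 := by
    refine Finset.sum_congr rfl fun j _ => ?_
    simp
  rw [two_mul, e2, e1]
  nth_rewrite 3 [Finset.sum_comm]
  rw [sq, Finset.sum_mul_sum, ← Finset.sum_add_distrib, ← Finset.sum_add_distrib]
  refine Finset.sum_congr rfl fun i _ => ?_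
  rw [← Finset.sum_add_distrib, ← Finset.sum_add_distrib]
  refine Finset.sum_congr rfl fun j _ => ?_
  have h1 := sub_ne_zero.2 (hw i)
  have h2 := sub_ne_zero.2 (hw j)
  by_cases hij : i = j
  · subst hij
    simp
    field_simp
  · have h3 := sub_ne_zero.2 (fun e => hij (h e))
    have h4 : w j - w i = -(w i - w j) := by ring
    rw [h4, if_neg hij]
    field_simp
    ring

lemma aux_erase {d : ℕ} (f : Fin d → ℂ) (i : Fin d) (h : f i = 0) :
    ∑ j ∈ univ.erase i, f j = ∑ j, f j := by
  rw [← Finset.add_sum_erase univ f (Finset.mem_univ i), h, zero_add]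

lemma aux_deriv {ι : Type*} [Fintype ι] (c w : ι → ℂ) (x : ℂ) (hw : ∀ i, x ≠ w i) :
    HasDerivAt (fun x => ∑ i, c i / (x - w i)) (-∑ i, c i / (x - w i) ^ 2) x := by
  rw [← Finset.sum_neg_distrib]
  refine HasDerivAt.fun_sum fun i _ => ?_
  have h1 := sub_ne_zero.2 (hw i)
  have := (hasDerivAt_const x (c i)).div ((hasDerivAt_id x).sub_const (w i)) h1
  refine HasDerivAt.congr_deriv this ?_
  simp [neg_div]

/-- Proposition (i) on the operator `L₁` from a λ-oper: for a solution of the exponential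
Gaudin Bethe Ansatz equations, the potential `a₋² + a₋'` has the stated explicit
partial-fraction form (with no poles at the points `t j`). -/
theorem exp_gaudin_L1_potential (n : ℕ) (hn : 1 ≤ n)
    (z : Fin n → ℂ) (hz_inj : Function.Injective z)
    (m l : Fin n → ℂ) (n₀ n₁ : ℂ) (d₀ d₁ : ℕ)
    (s : Fin d₀ → ℂ) (t : Fin d₁ → ℂ)
    (hs_inj : Function.Injective s) (ht_inj : Function.Injective t)
    (hst : ∀ i j, s i ≠ t j) (hsz : ∀ i a, s i ≠ z a) (htz : ∀ j a, t j ≠ z a)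
    (hBAE1 : ∀ i, ∑ a, m a / (s i - z a) + ∑ j, 1 / (s i - t j)
      - ∑ j ∈ univ.erase i, 1 / (s i - s j) + n₀ = 0)
    (hBAE2 : ∀ i, ∑ a, l a / (t i - z a) + ∑ j, 1 / (t i - s j)
      - ∑ j ∈ univ.erase i, 1 / (t i - t j) + n₁ = 0)
    (aminus : ℂ → ℂ)
    (haminus : ∀ x, aminus x
      = -(n₁ + ∑ a, l a / (x - z a) + ∑ i, 1 / (x - s i) - ∑ j, 1 / (x - t j))) :
    ∀ x : ℂ, (∀ a, x ≠ z a) → (∀ i, x ≠ s i) → (∀ j, x ≠ t j) →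
      (aminus x) ^ 2 + deriv aminus x
        = n₁ ^ 2 + ∑ a, ((l a) ^ 2 + l a) / (x - z a) ^ 2
          + ∑ i, 2 / (x - s i) ^ 2
          + ∑ a, (2 * n₁ * l a + (∑ b ∈ univ.erase a, 2 * l a * l b / (z a - z b))
              - 2 * l a * ((∑ j, 1 / (z a - t j)) - ∑ i, 1 / (z a - s i))) / (x - z a)
          + ∑ i, (2 * (n₀ + n₁) + ∑ a, (2 * m a + 2 * l a) / (s i - z a)) / (x - s i) := by
  intro x hxz hxs hxt
  have hd : deriv aminus x = ∑ a, l a / (x - z a) ^ 2 + ∑ i, 1 / (x - s i) ^ 2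
      - ∑ j, 1 / (x - t j) ^ 2 := by
    have hf : aminus = fun x => -(n₁ + ∑ a, l a / (x - z a) + ∑ i, 1 / (x - s i)
        - ∑ j, 1 / (x - t j)) := funext haminus
    have := ((((aux_deriv l z x hxz).const_add n₁).add
      (aux_deriv (fun _ => 1) s x hxs)).sub (aux_deriv (fun _ => 1) t x hxt)).neg
    rw [hf]
    refine (HasDerivAt.deriv this).trans ?_
    ring
  have LL := aux_sq l z x hxz hz_inj
  have SS := aux_sq (fun _ => 1) s x hxs hs_inj
  have TT := aux_sq (fun _ => 1) t x hxt ht_inj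
  have LS := aux_cross l z (fun _ => 1) s x hxz hxs (fun a i => (hsz i a).symm)
  have LT := aux_cross l z (fun _ => 1) t x hxz hxt (fun a i => (htz i a).symm)
  have ST := aux_cross (fun _ => 1) s (fun _ => 1) t x hxs hxt hst
  simp only [one_mul, one_pow] at SS TT LS LT ST
  have B1 : ∀ i, 2 * (n₀ + n₁) + ∑ a, (2 * m a + 2 * l a) / (s i - z a)
      = 2 * (n₁ + ∑ a, l a / (s i - z a) + ∑ j, 1 / (s i - s j) - ∑ j, 1 / (s i - t j)) := by
    intro i
    have h := hBAE1 i
    rw [aux_erase (fun j => 1 / (s i - s j)) i (by simp)] at h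
    simp only [add_div, Finset.sum_add_distrib, mul_div_assoc, ← Finset.mul_sum]
    linear_combination 2 * h
  have B2 : ∑ j, (∑ a, l a / (t j - z a) + ∑ i, 1 / (t j - s i)
      - ∑ i, 1 / (t j - t i) + n₁) / (x - t j) = 0 := by
    refine Finset.sum_eq_zero fun i _ => ?_
    have h := hBAE2 i
    rw [aux_erase (fun j => 1 / (t i - t j)) i (by simp)] at h
    rw [h, zero_div]
  have B3 : ∀ a, ∑ b ∈ univ.erase a, 2 * l a * l b / (z a - z b)
      = 2 * (l a * ∑ b, l b / (z a - z b)) := by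
    intro a
    rw [aux_erase (fun b => 2 * l a * l b / (z a - z b)) a (by simp)]
    simp only [mul_div_assoc, mul_assoc, ← Finset.mul_sum]
  have R1 : ∑ i, (2 * (n₀ + n₁) + ∑ a, (2 * m a + 2 * l a) / (s i - z a)) / (x - s i)
      = 2 * (n₁ * ∑ i, 1 / (x - s i) + ∑ i, (∑ a, l a / (s i - z a)) / (x - s i)
        + ∑ i, (∑ j, 1 / (s i - s j)) / (x - s i)
        - ∑ i, (∑ j, 1 / (s i - t j)) / (x - s i)) := by
    simp only [B1]
    rw [Finset.mul_sum, ← Finset.sum_add_distrib, ← Finset.sum_add_distrib,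
      ← Finset.sum_sub_distrib, Finset.mul_sum]
    exact Finset.sum_congr rfl fun i _ => by ring
  have R2 : ∑ j, (∑ a, l a / (t j - z a)) / (x - t j) + ∑ j, (∑ i, 1 / (t j - s i)) / (x - t j)
      - ∑ j, (∑ i, 1 / (t j - t i)) / (x - t j) + n₁ * ∑ j, 1 / (x - t j) = 0 := by
    rw [← B2, Finset.mul_sum, ← Finset.sum_add_distrib, ← Finset.sum_sub_distrib,
      ← Finset.sum_add_distrib]
    exact Finset.sum_congr rfl fun i _ => by ring
  have R3 : ∑ a, (2 * n₁ * l a + (∑ b ∈ univ.erase a, 2 * l a * l b / (z a - z b))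
              - 2 * l a * ((∑ j, 1 / (z a - t j)) - ∑ i, 1 / (z a - s i))) / (x - z a)
      = 2 * (n₁ * ∑ a, l a / (x - z a) + ∑ a, l a * (∑ b, l b / (z a - z b)) / (x - z a)
        + ∑ a, l a * (∑ i, 1 / (z a - s i)) / (x - z a)
        - ∑ a, l a * (∑ j, 1 / (z a - t j)) / (x - z a)) := by
    simp only [B3]
    rw [Finset.mul_sum, ← Finset.sum_add_distrib, ← Finset.sum_add_distrib,
      ← Finset.sum_sub_distrib, Finset.mul_sum]
    exact Finset.sum_congr rfl fun i _ => by ring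
  have R4 : ∑ a, ((l a) ^ 2 + l a) / (x - z a) ^ 2
      = ∑ a, (l a) ^ 2 / (x - z a) ^ 2 + ∑ a, l a / (x - z a) ^ 2 := by
    simp only [add_div, Finset.sum_add_distrib]
  have R5 : ∑ i, 2 / (x - s i) ^ 2 = 2 * ∑ i, 1 / (x - s i) ^ 2 := by
    rw [Finset.mul_sum]
    exact Finset.sum_congr rfl fun i _ => by ring
  rw [hd, haminus x, R1, R3, R4, R5]
  linear_combination LL + SS + TT + 2 * LS - 2 * LT - 2 * ST - 2 * R2
end

section
/- Let k, l, m ∈ ℂ with k = 2m + 2l, let s₁,…,s_{d₀} ∈ ℂ∖{0,1} be pairwise distinct, t₁,…,t_{d₁} ∈ ℂ∖{0,1} be pairwise distinct, with s_i ≠ t_j, satisfying the Gaudin Bethe Ansatz Equations (BLZ case): for each i, (1/2)/(s_i−1) + m/s_i + ∑_j 1/(s_i−t_j) − ∑_{j≠i} 1/(s_i−s_j) = 0, and for each i, l/t_i + ∑_j 1/(t_i−s_j) − ∑_{j≠i} 1/(t_i−t_j) = 0. Define b₀ = −m + ∑_{i=1}^{d₀} 2m/s_i − ∑_{j=1}^{d₁}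 2m/t_j, b₁ = m + ∑_{i=1}^{d₀} 1/(s_i−1) − ∑_{j=1}^{d₁} 1/(t_j−1), and q_j = k/t_j + 1/(t_j−1) for j = 1,…,d₁. Then b₀ + b₁ + ∑_{j=1}^{d₁} q_j = 0. -/
open Finset

lemma gaudin_antisymm_sum {d : ℕ} (s : Fin d → ℂ) :
    ∑ i, ∑ j ∈ univ.erase i, 1 / (s i - s j) = 0 := by
  have h1 : ∀ i, ∑ j ∈ univ.erase i, 1 / (s i - s j) = ∑ j, 1 / (s i - s j) := by
    intro i
    apply Finset.sum_erase
    simp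
  simp only [h1]
  have h2 : ∑ i, ∑ j, 1 / (s i - s j) = - ∑ i, ∑ j, 1 / (s i - s j) := by
    conv_lhs => rw [Finset.sum_comm]
    simp only [← Finset.sum_neg_distrib]
    refine Finset.sum_congr rfl fun i _ => Finset.sum_congr rfl fun j _ => ?_
    rw [← neg_sub, div_neg]
  exact self_eq_neg.mp h2

/-- For a solution of the Gaudin Bethe Ansatz equations in the BLZ case (with `k = 2m + 2l`),
the residue coefficients `b₀`, `b₁`, `q j` of the operator `L₀` satisfy
`b₀ + b₁ + ∑ j, q j = 0` (no `1/x` term at infinity). -/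
theorem gaudin_BAE_L0_no_residue_at_infinity (k l m : ℂ) (hk : k = 2 * m + 2 * l)
    (d₀ d₁ : ℕ) (s : Fin d₀ → ℂ) (t : Fin d₁ → ℂ)
    (hs_inj : Function.Injective s) (ht_inj : Function.Injective t)
    (hs0 : ∀ i, s i ≠ 0) (hs1 : ∀ i, s i ≠ 1)
    (ht0 : ∀ j, t j ≠ 0) (ht1 : ∀ j, t j ≠ 1)
    (hst : ∀ i j, s i ≠ t j)
    (hBAE1 : ∀ i, (1/2) / (s i - 1) + m / s i
      + ∑ j, 1 / (s i - t j) - ∑ j ∈ univ.erase i, 1 / (s i - s j) = 0)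
    (hBAE2 : ∀ i, l / t i + ∑ j, 1 / (t i - s j)
      - ∑ j ∈ univ.erase i, 1 / (t i - t j) = 0)
    (b₀ b₁ : ℂ) (q : Fin d₁ → ℂ)
    (hb₀ : b₀ = -m + (∑ i, 2 * m / s i) - ∑ j, 2 * m / t j)
    (hb₁ : b₁ = m + (∑ i, 1 / (s i - 1)) - ∑ j, 1 / (t j - 1))
    (hq : ∀ j, q j = k / t j + 1 / (t j - 1)) :
    b₀ + b₁ + ∑ j, q j = 0 := by
  have e1 := Finset.sum_eq_zero (s := univ) fun i _ => hBAE1 i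
  have e2 := Finset.sum_eq_zero (s := univ) fun i _ => hBAE2 i
  rw [Finset.sum_sub_distrib, gaudin_antisymm_sum] at e1 e2
  simp only [Finset.sum_add_distrib] at e1 e2
  have h3 : ∑ i, ∑ j, 1 / (t i - s j) = - ∑ i, ∑ j, 1 / (s i - t j) := by
    rw [Finset.sum_comm]
    simp only [← Finset.sum_neg_distrib]
    refine Finset.sum_congr rfl fun i _ => Finset.sum_congr rfl fun j _ => ?_
    rw [← neg_sub, div_neg]
  rw [h3] at e2
  rw [hb₀, hb₁, Finset.sum_congr rfl fun j _ => hq j, hk]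
  simp only [Finset.sum_add_distrib]
  simp only [div_eq_mul_inv, ← Finset.mul_sum] at e1 e2 ⊢
  linear_combination 2 * e1 + 2 * e2
end

section
/- Let k, l ∈ ℂ with (k+3)(k−2l+1)(k+2l+3) ≠ 0, k+2 ≠ 0, k−2l ≠ 0 and k+2l+2 ≠ 0. For s ∈ ℂ∖{0,1} set p = k/s + 1/(s−1) and f(s) = −p³/4 − p²/s + p(l(l+1)−1)/s² + 2l(l+1)/s³. Then f(s) = 0 if and only if s ∈ { (k−2l)/(k−2l+1), (k+2)/(k+3), (k+2l+2)/(k+2l+3) }. -/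
/-- The trivial-monodromy condition for the degree-one operator `L^G`: with
`p = k/s + 1/(s-1)` and
`f(s) = -p³/4 - p²/s + p(l(l+1)-1)/s² + 2l(l+1)/s³`, one has `f(s) = 0` if and only if
`s` is one of `(k-2l)/(k-2l+1)`, `(k+2)/(k+3)`, `(k+2l+2)/(k+2l+3)`. -/
theorem degree_one_trivial_monodromy (k l : ℂ)
    (h1 : (k + 3) * (k - 2 * l + 1) * (k + 2 * l + 3) ≠ 0)
    (h2 : k + 2 ≠ 0) (h3 : k - 2 * l ≠ 0) (h4 : k + 2 * l + 2 ≠ 0) :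
    ∀ s : ℂ, s ≠ 0 → s ≠ 1 →
      ((-(k / s + 1 / (s - 1)) ^ 3 / 4 - (k / s + 1 / (s - 1)) ^ 2 / s
          + (k / s + 1 / (s - 1)) * (l * (l + 1) - 1) / s ^ 2
          + 2 * l * (l + 1) / s ^ 3 = 0)
        ↔ (s = (k - 2 * l) / (k - 2 * l + 1) ∨ s = (k + 2) / (k + 3)
            ∨ s = (k + 2 * l + 2) / (k + 2 * l + 3))) := by
  intro s hs hs1
  have hs2 : s - 1 ≠ 0 := sub_ne_zero.mpr hs1
  have ha : k + 3 ≠ 0 := fun h => h1 (by rw [h]; ring)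
  have hb : k - 2 * l + 1 ≠ 0 := fun h => h1 (by rw [h]; ring)
  have hc : k + 2 * l + 3 ≠ 0 := fun h => h1 (by rw [h]; ring)
  have key : -(k / s + 1 / (s - 1)) ^ 3 / 4 - (k / s + 1 / (s - 1)) ^ 2 / s
          + (k / s + 1 / (s - 1)) * (l * (l + 1) - 1) / s ^ 2
          + 2 * l * (l + 1) / s ^ 3
      = (s * (k - 2 * l + 1) - (k - 2 * l)) * ((s * (k + 3) - (k + 2)) *
          (s * (k + 2 * l + 3) - (k + 2 * l + 2))) * (-1 / (4 * s ^ 3 * (s - 1) ^ 3)) := by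
    field_simp
    ring
  have hd : (-1 / (4 * s ^ 3 * (s - 1) ^ 3)) ≠ 0 :=
    div_ne_zero (by norm_num) (mul_ne_zero (mul_ne_zero (by norm_num) (pow_ne_zero _ hs))
      (pow_ne_zero _ hs2))
  rw [key, mul_eq_zero, or_iff_left hd, mul_eq_zero, mul_eq_zero, sub_eq_zero, sub_eq_zero,
    sub_eq_zero, eq_div_iff ha, eq_div_iff hb, eq_div_iff hc]
end

section
/- Let k, l ∈ ℂ with k+2 ≠ 0, k+3 ≠ 0, l ≠ 0 and l+1 ≠ 0. Consider complex numbers s ∈ ℂ∖{0,1} and t ∈ ℂ∖{0} with s ≠ t. Then the pair (s,t) satisfies the system (k−2l)/s + 1/(s−1) + 2/(s−t) = 0 and 2l/t + 2/(t−s) = 0 if and only if s = (k+2)/(k+3) and t = (l/(l+1))·((k+2)/(k+3)). -/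
/-- The Gaudin Bethe Ansatz equations (BLZ case) for depth pair `(1,1)` have the unique
solution `s = (k+2)/(k+3)`, `t = (l/(l+1))·((k+2)/(k+3))`. -/
theorem gaudin_BAE_depth_one_one (k l : ℂ)
    (h2 : k + 2 ≠ 0) (h3 : k + 3 ≠ 0) (hl : l ≠ 0) (hl1 : l + 1 ≠ 0) :
    ∀ s t : ℂ, s ≠ 0 → s ≠ 1 → t ≠ 0 → s ≠ t →
      (((k - 2 * l) / s + 1 / (s - 1) + 2 / (s - t) = 0
          ∧ 2 * l / t + 2 / (t - s) = 0)
        ↔ (s = (k + 2) / (k + 3) ∧ t = (l / (l + 1)) * ((k + 2) / (k + 3)))) := by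
  intro s t hs hs1 ht hst
  have hs1' : s - 1 ≠ 0 := sub_ne_zero.mpr hs1
  have hst' : s - t ≠ 0 := sub_ne_zero.mpr hst
  have hts' : t - s ≠ 0 := sub_ne_zero.mpr (Ne.symm hst)
  have e2 : 2 * l / t + 2 / (t - s) = 0 ↔ t = l / (l + 1) * s := by
    rw [div_add_div _ _ ht hts', div_eq_zero_iff, or_iff_left (mul_ne_zero ht hts'),
      div_mul_eq_mul_div, eq_div_iff hl1]
    constructor <;> intro h
    · linear_combination h / 2
    · linear_combination 2 * h
  have e1 : t = l / (l + 1) * s →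
      ((k - 2 * l) / s + 1 / (s - 1) + 2 / (s - t) = 0 ↔ s = (k + 2) / (k + 3)) := by
    intro h
    have hd : s - t = s / (l + 1) := by
      rw [h]
      field_simp
      ring
    have hq : (k - 2 * l) / s + 1 / (s - 1) + 2 / (s - t)
        = ((k + 3) * s - (k + 2)) / (s * (s - 1)) := by
      rw [hd]
      field_simp
      ring
    rw [hq, div_eq_zero_iff, or_iff_left (mul_ne_zero hs hs1'), eq_div_iff h3]
    constructor <;> intro h
    · linear_combination h
    · linear_combination h
  constructor
  · rintro ⟨h, h'⟩
    have ht' := e2.mp h'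
    have hs' := (e1 ht').mp h
    exact ⟨hs', by rw [← hs']; exact ht'⟩
  · rintro ⟨h, h'⟩
    rw [← h] at h'
    exact ⟨(e1 h').mpr h, e2.mpr h'⟩
end

section
/- Let k, l ∈ ℂ with l ≠ 0, 2l−1 ≠ 0, 2l+1 ≠ 0, k+2l+2 ≠ 0 and k+2l+3 ≠ 0. Consider s ∈ ℂ∖{0,1} and t₁, t₂ ∈ ℂ∖{0} with s, t₁, t₂ pairwise distinct. Then (s, t₁, t₂) satisfies the system (k−2l)/s + 1/(s−1) + 2/(s−t₁) + 2/(s−t₂) = 0, l/t₁ + 1/(t₁−s) − 1/(t₁−t₂) = 0, l/t₂ + 1/(t₂−s) − 1/(t₂−t₁) = 0, if and only if s = (k+2l+2)/(k+2l+3), t₁ + t₂ = ((2l−1)/l)·s and t₁·t₂ = ((2l−1)/(2l+1))·s². -/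
/-- The Gaudin Bethe Ansatz equations (BLZ case) for depth pair `(1,2)` have the unique
solution (up to exchanging `t₁` and `t₂`) with `s = (k+2l+2)/(k+2l+3)`,
`t₁ + t₂ = ((2l-1)/l)·s` and `t₁·t₂ = ((2l-1)/(2l+1))·s²`. -/
theorem gaudin_BAE_depth_one_two (k l : ℂ)
    (hl : l ≠ 0) (hl1 : 2 * l - 1 ≠ 0) (hl2 : 2 * l + 1 ≠ 0)
    (hk1 : k + 2 * l + 2 ≠ 0) (hk2 : k + 2 * l + 3 ≠ 0) :
    ∀ s t₁ t₂ : ℂ, s ≠ 0 → s ≠ 1 → t₁ ≠ 0 → t₂ ≠ 0 →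
      s ≠ t₁ → s ≠ t₂ → t₁ ≠ t₂ →
      (((k - 2 * l) / s + 1 / (s - 1) + 2 / (s - t₁) + 2 / (s - t₂) = 0
          ∧ l / t₁ + 1 / (t₁ - s) - 1 / (t₁ - t₂) = 0
          ∧ l / t₂ + 1 / (t₂ - s) - 1 / (t₂ - t₁) = 0)
        ↔ (s = (k + 2 * l + 2) / (k + 2 * l + 3)
            ∧ t₁ + t₂ = ((2 * l - 1) / l) * s
            ∧ t₁ * t₂ = ((2 * l - 1) / (2 * l + 1)) * s ^ 2)) := by
  intro s a b hs hs1 ha hb hsa hsb hab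
  have h1 : s - 1 ≠ 0 := sub_ne_zero.2 hs1
  have h2 : s - a ≠ 0 := sub_ne_zero.2 hsa
  have h3 : s - b ≠ 0 := sub_ne_zero.2 hsb
  have h4 : a - b ≠ 0 := sub_ne_zero.2 hab
  have h5 : b - a ≠ 0 := sub_ne_zero.2 hab.symm
  have h6 : a - s ≠ 0 := sub_ne_zero.2 hsa.symm
  have h7 : b - s ≠ 0 := sub_ne_zero.2 hsb.symm
  have e2 : l / a + 1 / (a - s) - 1 / (a - b)
      = (l * (a - s) * (a - b) + a * (s - b)) / (a * (a - s) * (a - b)) := by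
    field_simp; ring
  have e3 : l / b + 1 / (b - s) - 1 / (b - a)
      = (l * (b - s) * (b - a) + b * (s - a)) / (b * (b - s) * (b - a)) := by
    field_simp; ring
  have hP : (a + b = ((2 * l - 1) / l) * s) ↔ l * (a + b) - (2 * l - 1) * s = 0 := by
    rw [div_mul_eq_mul_div, eq_div_iff hl, ← sub_eq_zero, mul_comm]
  have hQ : (a * b = ((2 * l - 1) / (2 * l + 1)) * s ^ 2) ↔
      (2 * l + 1) * (a * b) - (2 * l - 1) * s ^ 2 = 0 := by
    rw [div_mul_eq_mul_div, eq_div_iff hl2, ← sub_eq_zero, mul_comm]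
  have hS : (s = (k + 2 * l + 2) / (k + 2 * l + 3)) ↔
      (k + 2 * l + 2) * (s - 1) + s = 0 := by
    rw [eq_div_iff hk2, ← sub_eq_zero]
    constructor <;> intro h <;> linear_combination h
  have key : l * (a + b) - (2 * l - 1) * s = 0 →
      (2 * l + 1) * (a * b) - (2 * l - 1) * s ^ 2 = 0 →
      ((k - 2 * l) / s + 1 / (s - 1) + 2 / (s - a) + 2 / (s - b) = 0 ↔
        (k + 2 * l + 2) * (s - 1) + s = 0) := by
    intro P Q
    have h : 2 / (s - a) + 2 / (s - b) = 2 * (2 * l + 1) / s := by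
      rw [div_add_div _ _ h2 h3, div_eq_div_iff (mul_ne_zero h2 h3) hs]
      linear_combination (4 * s) * P - 2 * Q
    have h' : (k - 2 * l) / s + 1 / (s - 1) + 2 / (s - a) + 2 / (s - b)
        = ((k + 2 * l + 2) * (s - 1) + s) / (s * (s - 1)) := by
      rw [add_assoc, h]; field_simp; ring
    rw [h', div_eq_zero_iff, or_iff_left (mul_ne_zero hs h1)]
  rw [e2, e3, div_eq_zero_iff, div_eq_zero_iff, or_iff_left (mul_ne_zero (mul_ne_zero ha h6) h4),
    or_iff_left (mul_ne_zero (mul_ne_zero hb h7) h5), hP, hQ, hS]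
  constructor
  · rintro ⟨E1, E2, E3⟩
    have P : l * (a + b) - (2 * l - 1) * s = 0 := by
      apply mul_left_cancel₀ h4
      linear_combination E2 - E3
    have Q : (2 * l + 1) * (a * b) - (2 * l - 1) * s ^ 2 = 0 := by
      linear_combination (-1/2) * (E2 + E3) + (1/2) * (a + b + 2 * s) * P
    exact ⟨(key P Q).1 E1, P, Q⟩
  · rintro ⟨S, P, Q⟩
    refine ⟨(key P Q).2 S, ?_, ?_⟩
    · linear_combination (1/2) * (a + b + 2 * s) * P - Q + (1/2) * (a - b) * P
    · linear_combination (1/2) * (a + b + 2 * s) * P - Q - (1/2) * (a - b) * P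
end

section
/- Let k > −2, λ > 0 and L > 0 be real numbers, and define U : (0,∞) → ℝ by U(x) = λ²·x^k·(x−1) + L²/x² (real powers). Set x_* = (k+2)/(k+3) and u_* = (k+3)^{(k+3)/2} / (k+2)^{(k+2)/2}. Then: (1) if λ < u_*·L then U(x) > 0 for all x > 0; (2) if λ = u_*·L then U(x_*) = 0 and U(x) > 0 for all x > 0 with x ≠ x_*; (3) if λ > u_*·L then there exist unique real numbers x₋ < x₊ with 0 < x₋ < x_* < x₊ < 1 such that U(x₋) = U(x₊) = 0, U(x) < 0 for x₋ < x < x₊, and U(x) > 0 for 0 < x < x₋ and for x > x₊. -/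
theorem etp_hasDeriv (a x : ℝ) (hx : 0 < x) :
    HasDerivAt (fun x : ℝ => x ^ a * (1 - x)) (x ^ (a - 1) * (a - (a + 1) * x)) x := by
  have h1 := Real.hasDerivAt_rpow_const (x := x) (p := a) (Or.inl hx.ne')
  have h2 : HasDerivAt (fun x : ℝ => 1 - x) (-1) x := by
    simpa using (hasDerivAt_id x).const_sub 1
  have h3 := h1.mul h2
  have e : x ^ a = x ^ (a - 1) * x := by
    rw [← Real.rpow_add_one hx.ne']; congr 1; ring
  have e2 : x ^ (a - 1) * (a - (a + 1) * x) = a * x ^ (a - 1) * (1 - x) + x ^ a * -1 := by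
    rw [e]; ring
  rw [e2]
  exact h3

theorem etp_cont (a : ℝ) (ha : 0 < a) : Continuous (fun x : ℝ => x ^ a * (1 - x)) :=
  (Real.continuous_rpow_const ha.le).mul (by fun_prop)

theorem etp_mono (a : ℝ) (ha : 0 < a) :
    StrictMonoOn (fun x : ℝ => x ^ a * (1 - x)) (Set.Icc 0 (a / (a + 1))) := by
  apply strictMonoOn_of_deriv_pos (convex_Icc _ _) (etp_cont a ha).continuousOn
  intro x hx
  rw [interior_Icc] at hx
  rw [(etp_hasDeriv a x hx.1).deriv]
  have := (lt_div_iff₀ (by linarith : 0 < a + 1)).1 hx.2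
  exact mul_pos (Real.rpow_pos_of_pos hx.1 _) (by linarith)

theorem etp_anti (a : ℝ) (ha : 0 < a) :
    StrictAntiOn (fun x : ℝ => x ^ a * (1 - x)) (Set.Ici (a / (a + 1))) := by
  apply strictAntiOn_of_deriv_neg (convex_Ici _) (etp_cont a ha).continuousOn
  intro x hx
  rw [interior_Ici] at hx
  have hx0 : 0 < x := lt_trans (by positivity) hx
  rw [(etp_hasDeriv a x hx0).deriv]
  have := (div_lt_iff₀ (by linarith : 0 < a + 1)).1 hx
  exact mul_neg_of_pos_of_neg (Real.rpow_pos_of_pos hx0 _) (by linarith)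

theorem etp_max (a : ℝ) (ha : 0 < a) :
    ((a / (a + 1)) ^ a * (1 - a / (a + 1))) *
      ((a + 1) ^ ((a + 1) / 2) / a ^ (a / 2)) ^ 2 = 1 := by
  have hb : 0 < a + 1 := by linarith
  have e1 : ((a + 1) ^ ((a + 1) / 2)) ^ 2 = (a + 1) ^ a * (a + 1) := by
    rw [← Real.rpow_natCast, ← Real.rpow_mul hb.le, ← Real.rpow_add_one hb.ne']
    congr 1; push_cast; ring
  have e2 : (a ^ (a / 2)) ^ 2 = a ^ a := by
    rw [← Real.rpow_natCast, ← Real.rpow_mul ha.le]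
    congr 1; push_cast; ring
  rw [div_pow, e1, e2, Real.div_rpow ha.le hb.le]
  have := (Real.rpow_pos_of_pos ha a).ne'
  have := (Real.rpow_pos_of_pos hb a).ne'
  field_simp
  ring

/-- Classification of the turning points of the effective potential
`U(x) = λ²x^k(x−1) + L²/x²` on `(0,∞)`, according to the position of `λ` with respect to
`u_*·L`, where `x_* = (k+2)/(k+3)` and `u_* = (k+3)^{(k+3)/2}/(k+2)^{(k+2)/2}`. -/
theorem effective_potential_turning_points (k lam L : ℝ)
    (hk : -2 < k) (hlam : 0 < lam) (hL : 0 < L)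
    (U : ℝ → ℝ)
    (hU : ∀ x : ℝ, 0 < x → U x = lam ^ 2 * x ^ k * (x - 1) + L ^ 2 / x ^ 2)
    (xstar ustar : ℝ)
    (hxstar : xstar = (k + 2) / (k + 3))
    (hustar : ustar = (k + 3) ^ ((k + 3) / 2) / (k + 2) ^ ((k + 2) / 2)) :
    (lam < ustar * L → ∀ x : ℝ, 0 < x → 0 < U x)
    ∧ (lam = ustar * L → U xstar = 0 ∧ ∀ x : ℝ, 0 < x → x ≠ xstar → 0 < U x)
    ∧ (ustar * L < lam →
        ∃! p : ℝ × ℝ, 0 < p.1 ∧ p.1 < xstar ∧ xstar < p.2 ∧ p.2 < 1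
          ∧ U p.1 = 0 ∧ U p.2 = 0
          ∧ (∀ x : ℝ, p.1 < x → x < p.2 → U x < 0)
          ∧ (∀ x : ℝ, 0 < x → x < p.1 → 0 < U x)
          ∧ (∀ x : ℝ, p.2 < x → 0 < U x)) := by
  have ha : 0 < k + 2 := by linarith
  have h3 : k + 3 = (k + 2) + 1 := by ring
  rw [h3] at hxstar hustar
  have hmono := etp_mono (k + 2) ha
  have hanti := etp_anti (k + 2) ha
  have hcont := etp_cont (k + 2) ha
  have hmax := etp_max (k + 2) ha
  have hg0 : (fun x : ℝ => x ^ (k + 2) * (1 - x)) 0 = 0 := by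
    simp [Real.zero_rpow ha.ne']
  have hg1 : (fun x : ℝ => x ^ (k + 2) * (1 - x)) 1 = 0 := by simp
  have hx0 : 0 < xstar := by rw [hxstar]; positivity
  have hx1 : xstar < 1 := by
    rw [hxstar, div_lt_one (by linarith)]; linarith
  have hu : 0 < ustar := by rw [hustar]; positivity
  rw [← hustar, ← hxstar] at hmax
  rw [← hxstar] at hmono hanti
  change (fun x : ℝ => x ^ (k + 2) * (1 - x)) xstar * ustar ^ 2 = 1 at hmax
  have hV : ∀ x : ℝ, 0 < x → U x =
      (L ^ 2 - lam ^ 2 * (fun x : ℝ => x ^ (k + 2) * (1 - x)) x) / x ^ 2 := by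
    intro x hx
    have e : x ^ (k + 2) = x ^ k * x ^ 2 := by
      rw [Real.rpow_add hx]; norm_num
    rw [hU x hx]
    simp only [e]
    field_simp
    ring
  generalize (fun x : ℝ => x ^ (k + 2) * (1 - x)) = g at *
  clear hU
  have hpos : ∀ x : ℝ, 0 < x → lam ^ 2 * g x < L ^ 2 → 0 < U x := by
    intro x hx h
    rw [hV x hx]; exact div_pos (by linarith) (by positivity)
  have hneg : ∀ x : ℝ, 0 < x → L ^ 2 < lam ^ 2 * g x → U x < 0 := by
    intro x hx h
    rw [hV x hx]; exact div_neg_of_neg_of_pos (by linarith) (by positivity)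
  have hl2 : 0 < lam ^ 2 := by positivity
  have hgs : g xstar = 1 / ustar ^ 2 := by
    field_simp; exact hmax
  have hlt : ∀ x : ℝ, 0 < x → x ≠ xstar → g x < g xstar := by
    intro x hx hne
    rcases lt_or_gt_of_ne hne with h | h
    · exact hmono ⟨hx.le, h.le⟩ ⟨hx0.le, le_rfl⟩ h
    · exact hanti (Set.mem_Ici.2 le_rfl) (Set.mem_Ici.2 h.le) h
  refine ⟨?_, ?_, ?_⟩
  · intro h x hx
    apply hpos x hx
    have h1 : g x ≤ g xstar := by
      by_cases e : x = xstar
      · rw [e]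
      · exact (hlt x hx e).le
    have h2 : lam ^ 2 < (ustar * L) ^ 2 := by gcongr
    have h4 : lam ^ 2 * g xstar < L ^ 2 := by
      rw [hgs, mul_one_div, div_lt_iff₀ (by positivity)]; nlinarith
    nlinarith
  · intro h
    have h4 : lam ^ 2 * g xstar = L ^ 2 := by
      rw [hgs, h]; field_simp
    refine ⟨?_, ?_⟩
    · rw [hV _ hx0, h4]; simp
    · intro x hx hne
      have := hlt x hx hne
      apply hpos x hx
      nlinarith
  · intro h
    have h2 : (ustar * L) ^ 2 < lam ^ 2 := by gcongr
    have hc : L ^ 2 / lam ^ 2 < g xstar := by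
      rw [hgs, div_lt_div_iff₀ (by positivity) (by positivity)]; nlinarith
    have hc0 : 0 < L ^ 2 / lam ^ 2 := by positivity
    obtain ⟨p, hp, hgp⟩ := intermediate_value_Ioo hx0.le hcont.continuousOn
      (show L ^ 2 / lam ^ 2 ∈ Set.Ioo (g 0) (g xstar) from ⟨by rw [hg0]; exact hc0, hc⟩)
    obtain ⟨q, hq, hgq⟩ := intermediate_value_Ioo' hx1.le hcont.continuousOn
      (show L ^ 2 / lam ^ 2 ∈ Set.Ioo (g 1) (g xstar) from ⟨by rw [hg1]; exact hc0, hc⟩)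
    have ep : lam ^ 2 * g p = L ^ 2 := by rw [hgp]; field_simp
    have eq : lam ^ 2 * g q = L ^ 2 := by rw [hgq]; field_simp
    have hq0 : 0 < q := hx0.trans hq.1
    have hUp : U p = 0 := by rw [hV _ hp.1, ep]; simp
    have hUq : U q = 0 := by rw [hV _ hq0, eq]; simp
    have A : ∀ x : ℝ, p < x → x < q → U x < 0 := by
      intro x h1 h2
      apply hneg x (hp.1.trans h1)
      rw [← ep]
      apply mul_lt_mul_of_pos_left _ hl2
      rcases le_total x xstar with h | h
      · exact hmono ⟨hp.1.le, hp.2.le⟩ ⟨(hp.1.trans h1).le, h⟩ h1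
      · rw [hgp, ← hgq]
        exact hanti (Set.mem_Ici.2 h) (Set.mem_Ici.2 hq.1.le) h2
    have B : ∀ x : ℝ, 0 < x → x < p → 0 < U x := by
      intro x h1 h2
      apply hpos x h1
      rw [← ep]
      apply mul_lt_mul_of_pos_left _ hl2
      exact hmono ⟨h1.le, (h2.trans hp.2).le⟩ ⟨hp.1.le, hp.2.le⟩ h2
    have C : ∀ x : ℝ, q < x → 0 < U x := by
      intro x h1
      apply hpos x (hq0.trans h1)
      rw [← eq]
      apply mul_lt_mul_of_pos_left _ hl2
      exact hanti (Set.mem_Ici.2 hq.1.le) (Set.mem_Ici.2 (hq.1.trans h1).le) h1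
    refine ⟨(p, q), ⟨hp.1, hp.2, hq.1, hq.2, hUp, hUq, A, B, C⟩, ?_⟩
    rintro ⟨r, s⟩ ⟨r0, r1, s0, s1, hr, hs, -⟩
    dsimp only at *
    have e1 : r = p := by
      rcases lt_trichotomy r p with h | h | h
      · exact absurd hr (B r r0 h).ne'
      · exact h
      · exact absurd hr (A r h (r1.trans hq.1)).ne
    have e2 : s = q := by
      rcases lt_trichotomy s q with h | h | h
      · exact absurd hs (A s (hp.2.trans s0) h).ne
      · exact h
      · exact absurd hs (C s h).ne'
    rw [e1, e2]
end

section
/- Let q, γ ∈ ℂ∖{0} and let Q₊, Q₋ : ℂ∖{0} → ℂ be functions satisfying the QQ-system γ·Q₊(qλ)·Q₋(q⁻¹λ) − γ⁻¹·Q₊(q⁻¹λ)·Q₋(qλ) = 1 for every λ ∈ ℂ∖{0}. Suppose λ* ∈ ℂ∖{0} satisfies Q₊(λ*) = 0. Then γ·Q₊(q²λ*)·Q₋(λ*) = 1 and γ⁻¹·Q₊(q⁻²λ*)·Q₋(λ*) = −1; in particular Q₊(q²λ*) ≠ 0, Q₊(q⁻²λ*) ≠ 0, Q₋(λ*) ≠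 0, and γ²·Q₊(q²λ*) = −Q₊(q⁻²λ*), i.e. γ⁻²·Q₊(q⁻²λ*)/Q₊(q²λ*) = −1. -/
/-- Zeroes of `Q₊` satisfy the Bethe equations for Quantum KdV: if the `QQ`-system holds
on `ℂ∖{0}` and `Q₊(λ*) = 0` with `λ* ≠ 0`, then `γ Q₊(q²λ*) Q₋(λ*) = 1`,
`γ⁻¹ Q₊(q⁻²λ*) Q₋(λ*) = −1`, the indicated values are nonzero,
`γ² Q₊(q²λ*) = −Q₊(q⁻²λ*)`, and `γ⁻² Q₊(q⁻²λ*)/Q₊(q²λ*) = −1`. -/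
theorem QQ_system_bethe_equations (q γ : ℂ) (hq : q ≠ 0) (hγ : γ ≠ 0)
    (Qp Qm : ℂ → ℂ)
    (hQQ : ∀ lam : ℂ, lam ≠ 0 →
      γ * Qp (q * lam) * Qm (q⁻¹ * lam) - γ⁻¹ * Qp (q⁻¹ * lam) * Qm (q * lam) = 1)
    (lam₀ : ℂ) (hlam₀ : lam₀ ≠ 0) (hzero : Qp lam₀ = 0) :
    γ * Qp (q ^ 2 * lam₀) * Qm lam₀ = 1
    ∧ γ⁻¹ * Qp (q⁻¹ ^ 2 * lam₀) * Qm lam₀ = -1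
    ∧ Qp (q ^ 2 * lam₀) ≠ 0
    ∧ Qp (q⁻¹ ^ 2 * lam₀) ≠ 0
    ∧ Qm lam₀ ≠ 0
    ∧ γ ^ 2 * Qp (q ^ 2 * lam₀) = -Qp (q⁻¹ ^ 2 * lam₀)
    ∧ γ⁻¹ ^ 2 * Qp (q⁻¹ ^ 2 * lam₀) / Qp (q ^ 2 * lam₀) = -1 := by
  have h1 := hQQ (q * lam₀) (mul_ne_zero hq hlam₀)
  have h2 := hQQ (q⁻¹ * lam₀) (mul_ne_zero (inv_ne_zero hq) hlam₀)
  rw [inv_mul_cancel_left₀ hq, hzero, ← mul_assoc q q, ← pow_two] at h1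
  rw [mul_inv_cancel_left₀ hq, hzero, ← mul_assoc q⁻¹ q⁻¹, ← pow_two] at h2
  generalize Qp (q ^ 2 * lam₀) = a at *
  generalize Qp (q⁻¹ ^ 2 * lam₀) = b at *
  generalize Qm lam₀ = c at *
  have e1 : γ * a * c = 1 := by linear_combination h1
  have e2 : γ⁻¹ * b * c = -1 := by linear_combination -h2
  have ha : a ≠ 0 := by
    rintro rfl
    simp at e1
  have hb : b ≠ 0 := by
    rintro rfl
    simp at e2
  have hc : c ≠ 0 := by
    rintro rfl
    simp at e1
  have e3 : b * c = -γ := by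
    have h : γ * γ⁻¹ = 1 := mul_inv_cancel₀ hγ
    linear_combination γ * e2 - b * c * h
  have e4 : γ ^ 2 * a = -b := by
    apply mul_right_cancel₀ hc
    linear_combination γ * e1 + e3
  refine ⟨e1, e2, ha, hb, hc, e4, ?_⟩
  have hb' : b = -(γ ^ 2 * a) := by rw [e4, neg_neg]
  rw [hb']
  field_simp
end

section
/- Let q, γ ∈ ℂ∖{0} and let Q₊, Q₋ : ℂ∖{0} → ℂ satisfy the QQ-system γ·Q₊(qλ)·Q₋(q⁻¹λ) − γ⁻¹·Q₊(q⁻¹λ)·Q₋(qλ) = 1 for every λ ∈ ℂ∖{0}. Define T₁(λ) = γ²·Q₊(q²λ)·Q₋(q⁻²λ) − γ⁻²·Q₊(q⁻²λ)·Q₋(q²λ). Then for every λ ∈ ℂ∖{0}: T₁(λ)·Q₊(λ) = γ·Q₊(q²λ) + γ⁻¹·Q₊(q⁻²λ) and T₁(λ)·Q₋(λ) = γ⁻¹·Q₋(q²λ) + γ·Q₋(q⁻²λ). -/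
/-- The `TQ`-system: if `Q₊, Q₋` satisfy the `QQ`-system on `ℂ∖{0}` and
`T₁(λ) = γ² Q₊(q²λ) Q₋(q⁻²λ) − γ⁻² Q₊(q⁻²λ) Q₋(q²λ)`, then
`T₁(λ)Q₊(λ) = γ Q₊(q²λ) + γ⁻¹ Q₊(q⁻²λ)` and `T₁(λ)Q₋(λ) = γ⁻¹ Q₋(q²λ) + γ Q₋(q⁻²λ)`. -/
theorem TQ_system (q γ : ℂ) (hq : q ≠ 0) (hγ : γ ≠ 0)
    (Qp Qm : ℂ → ℂ)
    (hQQ : ∀ lam : ℂ, lam ≠ 0 →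
      γ * Qp (q * lam) * Qm (q⁻¹ * lam) - γ⁻¹ * Qp (q⁻¹ * lam) * Qm (q * lam) = 1)
    (T₁ : ℂ → ℂ)
    (hT₁ : ∀ lam : ℂ, T₁ lam
      = γ ^ 2 * Qp (q ^ 2 * lam) * Qm (q⁻¹ ^ 2 * lam)
        - γ⁻¹ ^ 2 * Qp (q⁻¹ ^ 2 * lam) * Qm (q ^ 2 * lam)) :
    ∀ lam : ℂ, lam ≠ 0 →
      (T₁ lam * Qp lam = γ * Qp (q ^ 2 * lam) + γ⁻¹ * Qp (q⁻¹ ^ 2 * lam))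
      ∧ (T₁ lam * Qm lam = γ⁻¹ * Qm (q ^ 2 * lam) + γ * Qm (q⁻¹ ^ 2 * lam)) := by
  intro lam hl
  have h1 := hQQ (q * lam) (mul_ne_zero hq hl)
  have h2 := hQQ (q⁻¹ * lam) (mul_ne_zero (inv_ne_zero hq) hl)
  have e1 : q * (q * lam) = q ^ 2 * lam := by ring
  have e2 : q⁻¹ * (q * lam) = lam := inv_mul_cancel_left₀ hq lam
  have e3 : q * (q⁻¹ * lam) = lam := mul_inv_cancel_left₀ hq lam
  have e4 : q⁻¹ * (q⁻¹ * lam) = q⁻¹ ^ 2 * lam := by ring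
  rw [e1, e2] at h1
  rw [e3, e4] at h2
  rw [hT₁ lam]
  generalize Qp (q ^ 2 * lam) = A at *
  generalize Qp (q⁻¹ ^ 2 * lam) = C at *
  generalize Qm (q ^ 2 * lam) = a at *
  generalize Qm (q⁻¹ ^ 2 * lam) = c at *
  generalize γ⁻¹ = g at *
  constructor
  · linear_combination γ * A * h2 + g * C * h1
  · linear_combination γ * c * h1 + g * a * h2
end

section
/- Let q, γ ∈ ℂ∖{0} and let Q₊, Q₋ : ℂ∖{0} → ℂ satisfy the QQ-system γ·Q₊(qλ)·Q₋(q⁻¹λ) − γ⁻¹·Q₊(q⁻¹λ)·Q₋(qλ) = 1 for every λ ∈ ℂ∖{0}. For every integer j define T_{j−1}(λ) = γ^{j}·Q₊(q^{j}λ)·Q₋(q^{−j}λ) − γ^{−j}·Q₊(q^{−j}λ)·Q₋(q^{j}λ). Then the fusion relations hold: for every integer j and every λ ∈ ℂ∖{0}, T₁(λ)·T_j(q^{j+1}λ) = T_{j−1}(q^{j+2}λ) + T_{j+1}(q^{j}λ). -/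
/-- The fusion relations: if `Q₊, Q₋` satisfy the `QQ`-system on `ℂ∖{0}` and the functions
`T_j` are defined by `T_{j−1}(λ) = γ^j Q₊(q^jλ) Q₋(q^{−j}λ) − γ^{−j} Q₊(q^{−j}λ) Q₋(q^{j}λ)`
for `j ∈ ℤ`, then `T₁(λ) T_j(q^{j+1}λ) = T_{j−1}(q^{j+2}λ) + T_{j+1}(q^{j}λ)`. -/
theorem fusion_relations (q γ : ℂ) (hq : q ≠ 0) (hγ : γ ≠ 0)
    (Qp Qm : ℂ → ℂ)
    (hQQ : ∀ lam : ℂ, lam ≠ 0 →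
      γ * Qp (q * lam) * Qm (q⁻¹ * lam) - γ⁻¹ * Qp (q⁻¹ * lam) * Qm (q * lam) = 1)
    (T : ℤ → ℂ → ℂ)
    (hT : ∀ j : ℤ, ∀ lam : ℂ, T (j - 1) lam
      = γ ^ j * Qp (q ^ j * lam) * Qm (q ^ (-j) * lam)
        - γ ^ (-j) * Qp (q ^ (-j) * lam) * Qm (q ^ j * lam)) :
    ∀ j : ℤ, ∀ lam : ℂ, lam ≠ 0 →
      T 1 lam * T j (q ^ (j + 1) * lam)
        = T (j - 1) (q ^ (j + 2) * lam) + T (j + 1) (q ^ j * lam) := by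
  intro j lam hl
  have h1 := hQQ (q * lam) (mul_ne_zero hq hl)
  have h2 := hQQ (q⁻¹ * lam) (mul_ne_zero (inv_ne_zero hq) hl)
  have e0 : q⁻¹ * (q * lam) = lam := by field_simp
  have e0' : q * (q⁻¹ * lam) = lam := by field_simp
  rw [e0] at h1
  rw [e0'] at h2
  have t1 : T 1 lam = γ ^ 2 * Qp (q * (q * lam)) * Qm (q⁻¹ * (q⁻¹ * lam))
      - γ⁻¹ ^ 2 * Qp (q⁻¹ * (q⁻¹ * lam)) * Qm (q * (q * lam)) := by
    have h := hT 2 lam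
    have a1 : q ^ (2 : ℤ) * lam = q * (q * lam) := by
      rw [zpow_ofNat]; ring
    have a2 : q ^ (-2 : ℤ) * lam = q⁻¹ * (q⁻¹ * lam) := by
      rw [zpow_neg, zpow_ofNat]; ring
    have a3 : γ ^ (-2 : ℤ) = γ⁻¹ ^ 2 := by
      rw [zpow_neg, zpow_ofNat, inv_pow]
    rw [a1, a2, a3, zpow_ofNat] at h
    norm_num at h ⊢
    exact h
  have key : ∀ a b c : ℤ, a + b = c → q ^ a * (q ^ b * lam) = q ^ c * lam := by
    intro a b c h
    rw [← h, zpow_add₀ hq, mul_assoc]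
  have z0 : q ^ (0 : ℤ) * lam = lam := by simp
  have z2 : q ^ (2 : ℤ) * lam = q * (q * lam) := by
    rw [zpow_ofNat]; ring
  have zm : q ^ (-2 : ℤ) * lam = q⁻¹ * (q⁻¹ * lam) := by
    rw [zpow_neg, zpow_ofNat]; ring
  have t2 := hT (j + 1) (q ^ (j + 1) * lam)
  rw [key (j + 1) (j + 1) (2 * j + 2) (by ring), key (-(j + 1)) (j + 1) 0 (by ring), z0,
    show j + 1 - 1 = j by ring] at t2
  have t3 := hT j (q ^ (j + 2) * lam)
  rw [key j (j + 2) (2 * j + 2) (by ring), key (-j) (j + 2) 2 (by ring), z2] at t3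
  have t4 := hT (j + 2) (q ^ j * lam)
  rw [key (j + 2) j (2 * j + 2) (by ring), key (-(j + 2)) j (-2) (by ring), zm,
    show j + 2 - 1 = j + 1 by ring] at t4
  rw [t1, t2, t3, t4]
  have p1 : γ ^ (j + 1) = γ ^ j * γ := zpow_add_one₀ hγ j
  have p2 : γ ^ (j + 2) = γ ^ j * γ ^ 2 := by rw [zpow_add₀ hγ, zpow_ofNat]
  have p3 : γ ^ (-(j + 1)) = γ ^ (-j) * γ⁻¹ := by
    rw [neg_add, zpow_add₀ hγ, zpow_neg_one]
  have p4 : γ ^ (-(j + 2)) = γ ^ (-j) * γ⁻¹ ^ 2 := by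
    rw [neg_add, zpow_add₀ hγ, zpow_neg, zpow_neg, zpow_ofNat, inv_pow]
  rw [p1, p2, p3, p4]
  have hg : γ * γ⁻¹ = 1 := mul_inv_cancel₀ hγ
  generalize Qp (q ^ (2 * j + 2) * lam) = A at *
  generalize Qm (q ^ (2 * j + 2) * lam) = B at *
  generalize Qp (q * (q * lam)) = a2 at *
  generalize Qm (q * (q * lam)) = b2 at *
  generalize Qp (q⁻¹ * (q⁻¹ * lam)) = am at *
  generalize Qm (q⁻¹ * (q⁻¹ * lam)) = bm at *
  generalize Qp lam = a0 at *
  generalize Qm lam = b0 at *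
  generalize γ ^ j = P at *
  generalize γ ^ (-j) = R at *
  generalize γ⁻¹ = g at *
  have u1 : (γ ^ 2 * a2 * bm - g ^ 2 * am * b2) * b0 = γ * bm + g * b2 := by
    linear_combination γ * bm * h1 + g * b2 * h2
  have u2 : (γ ^ 2 * a2 * bm - g ^ 2 * am * b2) * a0 = γ * a2 + g * am := by
    linear_combination γ * a2 * h2 + g * am * h1
  linear_combination P * γ * A * u1 - R * g * B * u2 + (P * A * b2 - R * B * a2) * hg
end

section
/- Let k > −2 and l be real numbers and let λ > 0. Set k̄ = (k+2)/(k+3), l̄ = (l+1/2)/(k+3) − 1/2, λ̄ = (λ/(k+3))^{2/(k+3)}, and define φ : (0,∞) → (0,∞) by φ(x) = (λ/(k+3))²·x^{k+3} (real powers). Then for every x > 0: φ′(x)²·( l̄(l̄+1)/φ(x)² + 1/φ(x) − φ(x)^{k̄−2}·λ̄ ) − (1/2)·( φ‴(x)/φ′(x) − (3/2)·(φ″(x)/φ′(x))² ) = l(l+1)/x² + λ²·x^{k}·(x−1). -/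
theorem deriv_mul_rpow_aux (f : ℝ → ℝ) (A p : ℝ) (hf : ∀ x : ℝ, 0 < x → f x = A * x ^ p) :
    ∀ x : ℝ, 0 < x → deriv f x = (A * p) * x ^ (p - 1) := by
  intro x hx
  have h : f =ᶠ[nhds x] fun y => A * y ^ p := by
    filter_upwards [lt_mem_nhds hx] with y hy using hf y hy
  rw [h.deriv_eq, ((Real.hasDerivAt_rpow_const (Or.inl hx.ne')).const_mul A).deriv]
  ring

/-- The (λ-dependent) change of variables `z = φ(x) = (λ/(k+3))² x^{k+3}`, together with the
parameter change `k̄ = (k+2)/(k+3)`, `l̄ + 1/2 = (l+1/2)/(k+3)`, `λ̄ = (λ/(k+3))^{2/(k+3)}`,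
transforms the BLZ potential `l̄(l̄+1)/z² + 1/z − z^{k̄−2}λ̄` into the potential
`l(l+1)/x² + λ²x^k(x−1)` of the operator `L^G` with `d₀ = 0`. -/
theorem blz_oper_change_of_variables (k l lam : ℝ) (hk : -2 < k) (hlam : 0 < lam)
    (kbar lbar lambar : ℝ)
    (hkbar : kbar = (k + 2) / (k + 3))
    (hlbar : lbar = (l + 1/2) / (k + 3) - 1/2)
    (hlambar : lambar = (lam / (k + 3)) ^ (2 / (k + 3)))
    (φ : ℝ → ℝ)
    (hφ : ∀ x : ℝ, 0 < x → φ x = (lam / (k + 3)) ^ 2 * x ^ (k + 3)) :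
    ∀ x : ℝ, 0 < x →
      (deriv φ x) ^ 2
          * (lbar * (lbar + 1) / (φ x) ^ 2 + 1 / φ x - (φ x) ^ (kbar - 2) * lambar)
        - (1/2) * (deriv (deriv (deriv φ)) x / deriv φ x
            - (3/2) * (deriv (deriv φ) x / deriv φ x) ^ 2)
      = l * (l + 1) / x ^ 2 + lam ^ 2 * x ^ k * (x - 1) := by
  intro x hx
  have d1 := deriv_mul_rpow_aux φ _ _ hφ
  have d2 := deriv_mul_rpow_aux _ _ _ d1
  have d3 := deriv_mul_rpow_aux _ _ _ d2
  have hn : 0 < k + 3 := by linarith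
  have hc : 0 < lam / (k + 3) := by positivity
  have key : (φ x) ^ (kbar - 2) * lambar * (φ x) ^ 2 = (lam / (k + 3)) ^ 2 * x ^ (k + 2) := by
    have hp : 0 < φ x := by rw [hφ x hx]; positivity
    rw [mul_right_comm, ← Real.rpow_natCast (φ x) 2, ← Real.rpow_add hp, hφ x hx,
      Real.mul_rpow (by positivity) (by positivity), ← Real.rpow_mul hx.le, hlambar,
      mul_right_comm, ← Real.rpow_natCast (lam / (k + 3)) 2, ← Real.rpow_mul hc.le,
      ← Real.rpow_add hc, hkbar]
    congr 2
    · push_cast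
      field_simp
      ring
    · push_cast
      field_simp
      ring
  have e2 : x ^ (k + 2) = x ^ k * x ^ 2 := by
    rw [Real.rpow_add hx]; norm_num
  have e3 : x ^ (k + 3) = x ^ k * x ^ 3 := by
    rw [Real.rpow_add hx]; norm_num
  have hX : 0 < x ^ k := by positivity
  have key2 : (φ x) ^ (kbar - 2) * lambar
      = (lam / (k + 3)) ^ 2 * (x ^ k * x ^ 2) / ((lam / (k + 3)) ^ 2 * (x ^ k * x ^ 3)) ^ 2 := by
    rw [eq_div_iff (by positivity), ← e3, ← hφ x hx, key, e2]
  rw [key2, d3 x hx, d2 x hx, d1 x hx, hφ x hx, hlbar]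
  simp only [Real.rpow_sub_one hx.ne', e3]
  generalize x ^ k = X at *
  obtain ⟨n, rfl⟩ : ∃ n, k = n - 3 := ⟨k + 3, by ring⟩
  simp only [sub_add_cancel] at *
  have hn' := hn.ne'
  field_simp
  ring
end

section
/- Let k > −2 and l be real numbers, let σ be a real number, and set ν = (2l+1)/(k+2). Suppose y : (0,∞) → ℂ is twice differentiable and satisfies the Bessel equation z²·y″(z) + z·y′(z) + (z² − ν²)·y(z) = 0 for all z > 0. Define h : (0,∞) → ℂ by h(ξ) = ξ^{(1−2σ)/(2(k+2))} · y( 2·ξ^{1/2}/(k+2) ) (real powers of ξ). Then h is twice differentiable and, writing (D h)(ξ) = (k+2)·ξ·h′(ξ), one has for all ξ > 0: (D(D h))(ξ) + (2σ−1)·(D h)(ξ) + ( (σ−l−1)(σ+l) + ξ )·h(ξ) = 0. -/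
theorem aux_deriv_s19 (k a : ℝ) (f : ℝ → ℂ) (f' : ℂ) (ξ : ℝ) (hξ : 0 < ξ)
    (hf : HasDerivAt f f' (2 * ξ ^ ((1 : ℝ) / 2) / (k + 2))) :
    HasDerivAt (fun ξ : ℝ => ((ξ ^ a : ℝ) : ℂ) * f (2 * ξ ^ ((1 : ℝ) / 2) / (k + 2)))
      (((ξ ^ a : ℝ) : ℂ) / (ξ : ℂ) * ((a : ℂ) * f (2 * ξ ^ ((1 : ℝ) / 2) / (k + 2))
        + ((2 * ξ ^ ((1 : ℝ) / 2) / (k + 2) : ℝ) : ℂ) / 2 * f')) ξ := by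
  have h1 := (Real.hasDerivAt_rpow_const (x := ξ) (p := a) (Or.inl hξ.ne')).ofReal_comp
  have h2 := ((Real.hasDerivAt_rpow_const (x := ξ) (p := (1:ℝ)/2)
    (Or.inl hξ.ne')).const_mul 2).div_const (k + 2)
  have h3 := h1.mul (HasDerivAt.scomp ξ hf h2)
  have hc : (ξ : ℂ) ≠ 0 := by exact_mod_cast hξ.ne'
  refine h3.congr_deriv ?_
  rw [Real.rpow_sub_one hξ.ne', Real.rpow_sub_one hξ.ne']
  simp only [Function.comp, Complex.real_smul]
  push_cast
  field_simp


/-- Bessel change of variables (eq. (kernelbessel) of the paper, with `σ = α + j`): if `y`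
solves the Bessel equation of order `ν = (2l+1)/(k+2)` on `(0,∞)`, then
`h(ξ) = ξ^{(1−2σ)/(2(k+2))}·y(2√ξ/(k+2))` is twice differentiable on `(0,∞)` and lies in the
kernel of `D² + (2σ−1)D + (σ−l−1)(σ+l) + ξ`, where `(D h)(ξ) = (k+2)·ξ·h′(ξ)`. -/
theorem bessel_kernel_change_of_variables (k l σ : ℝ) (hk : -2 < k)
    (ν : ℝ) (hν : ν = (2 * l + 1) / (k + 2))
    (y : ℝ → ℂ)
    (hy₁ : ∀ z : ℝ, 0 < z → DifferentiableAt ℝ y z)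
    (hy₂ : ∀ z : ℝ, 0 < z → DifferentiableAt ℝ (deriv y) z)
    (hbessel : ∀ z : ℝ, 0 < z →
      (z : ℂ) ^ 2 * deriv (deriv y) z + (z : ℂ) * deriv y z
        + ((z : ℂ) ^ 2 - (ν : ℂ) ^ 2) * y z = 0)
    (h : ℝ → ℂ)
    (hh : ∀ ξ : ℝ, 0 < ξ →
      h ξ = ((ξ ^ ((1 - 2 * σ) / (2 * (k + 2))) : ℝ) : ℂ)
        * y (2 * ξ ^ ((1 : ℝ) / 2) / (k + 2)))
    (D : (ℝ → ℂ) → ℝ → ℂ)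
    (hD : ∀ f : ℝ → ℂ, ∀ ξ : ℝ, D f ξ = (((k + 2) * ξ : ℝ) : ℂ) * deriv f ξ) :
    (∀ ξ : ℝ, 0 < ξ → DifferentiableAt ℝ h ξ ∧ DifferentiableAt ℝ (deriv h) ξ)
    ∧ ∀ ξ : ℝ, 0 < ξ →
        D (D h) ξ + ((2 * σ - 1 : ℝ) : ℂ) * D h ξ
          + ((((σ - l - 1) * (σ + l) : ℝ) : ℂ) + (ξ : ℂ)) * h ξ = 0 := by
  have hm : (0:ℝ) < k + 2 := by linarith
  have hmc : (k:ℂ) + 2 ≠ 0 := by exact_mod_cast hm.ne'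
  set a : ℝ := (1 - 2 * σ) / (2 * (k + 2)) with ha
  have hz : ∀ ξ : ℝ, 0 < ξ → 0 < 2 * ξ ^ ((1 : ℝ) / 2) / (k + 2) := fun ξ hξ => by positivity
  have nh : ∀ ξ : ℝ, 0 < ξ → ∀ᶠ x in nhds ξ, 0 < x := fun ξ hξ => lt_mem_nhds hξ
  have d1 : ∀ ξ : ℝ, 0 < ξ → HasDerivAt h _ ξ := fun ξ hξ =>
    (aux_deriv_s19 k a y _ ξ hξ (hy₁ _ (hz ξ hξ)).hasDerivAt).congr_of_eventuallyEq
      ((nh ξ hξ).mono fun x hx => hh x hx)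
  have hDh : ∀ ξ : ℝ, 0 < ξ → D h ξ = ((ξ ^ a : ℝ) : ℂ) *
      (fun z : ℝ => ((k:ℂ) + 2) * ((a:ℂ) * y z + (z:ℂ) / 2 * deriv y z))
        (2 * ξ ^ ((1 : ℝ) / 2) / (k + 2)) := by
    intro ξ hξ
    have hc : (ξ : ℂ) ≠ 0 := by exact_mod_cast hξ.ne'
    rw [hD, (d1 ξ hξ).deriv]
    push_cast
    field_simp
  have hG : ∀ z : ℝ, 0 < z → HasDerivAt
      (fun z : ℝ => ((k:ℂ) + 2) * ((a:ℂ) * y z + (z:ℂ) / 2 * deriv y z))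
      (((k:ℂ) + 2) * ((a:ℂ) * deriv y z + ((1:ℂ) / 2 * deriv y z
        + (z:ℂ) / 2 * deriv (deriv y) z))) z := by
    intro z hz
    have h0 : HasDerivAt (fun z : ℝ => (z:ℂ)) 1 z := Complex.ofRealCLM.hasDerivAt
    exact ((((hy₁ z hz).hasDerivAt.const_mul (a:ℂ)).add
      ((h0.div_const 2).mul (hy₂ z hz).hasDerivAt)).const_mul _)
  have d2 : ∀ ξ : ℝ, 0 < ξ → HasDerivAt (D h) _ ξ := fun ξ hξ =>
    (aux_deriv_s19 k a _ _ ξ hξ (hG _ (hz ξ hξ))).congr_of_eventuallyEq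
      ((nh ξ hξ).mono fun x hx => hDh x hx)
  refine ⟨fun ξ hξ => ⟨(d1 ξ hξ).differentiableAt, ?_⟩, fun ξ hξ => ?_⟩
  · have h0 : HasDerivAt (fun z : ℝ => (((k + 2) * z : ℝ) : ℂ)) _ ξ :=
      ((hasDerivAt_id ξ).const_mul (k + 2)).ofReal_comp
    have hne : (((k + 2) * ξ : ℝ) : ℂ) ≠ 0 := by exact_mod_cast (mul_pos hm hξ).ne'
    refine ((d2 ξ hξ).div h0 hne).differentiableAt.congr_of_eventuallyEq ?_
    refine (nh ξ hξ).mono fun x hx => ?_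
    have hne : (((k + 2) * x : ℝ) : ℂ) ≠ 0 := by exact_mod_cast (mul_pos hm hx).ne'
    simp only [Pi.div_apply]
    rw [hD, mul_div_cancel_left₀ _ hne]
  · have hc : (ξ : ℂ) ≠ 0 := by exact_mod_cast hξ.ne'
    have hb := hbessel _ (hz ξ hξ)
    have hz2 : (2 * ξ ^ ((1 : ℝ) / 2) / (k + 2)) ^ 2 * (k + 2) ^ 2 = 4 * ξ := by
      have : (ξ ^ ((1 : ℝ) / 2)) ^ 2 = ξ := by
        rw [← Real.sqrt_eq_rpow, Real.sq_sqrt hξ.le]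
      field_simp
      rw [this]; ring
    rw [hD (D h), (d2 ξ hξ).deriv, hDh ξ hξ, hh ξ hξ]
    generalize 2 * ξ ^ ((1 : ℝ) / 2) / (k + 2) = z at *
    have ea : (σ:ℂ) = 1 / 2 - (k + 2) * a := by
      have : σ = 1 / 2 - (k + 2) * a := by rw [ha]; field_simp; ring
      have := congrArg (fun t : ℝ => (t : ℂ)) this
      push_cast at this
      exact this
    have en : (l:ℂ) = ((k + 2) * ν - 1) / 2 := by
      have : l = ((k + 2) * ν - 1) / 2 := by rw [hν]; field_simp; ring
      exact_mod_cast this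
    have ez : (ξ:ℂ) = (z:ℂ) ^ 2 * (k + 2) ^ 2 / 4 := by
      have : ξ = z ^ 2 * (k + 2) ^ 2 / 4 := by linarith
      exact_mod_cast this
    generalize ((ξ ^ a : ℝ) : ℂ) = p at *
    have key : ∀ X : ℂ, (((k + 2) * ξ : ℝ) : ℂ) * (p / (ξ:ℂ) * X) = (k + 2) * p * X := by
      intro X; push_cast; field_simp
    rw [key]
    push_cast
    rw [ea, en, ez]
    linear_combination (p * ((k:ℂ) + 2) ^ 2 / 4) * hb
end
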